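/- Let L n be the number of lambda terms of size n and K n the number of neutral head normal forms of size n. Then the density of neutral head normal forms among plain lambda terms is ρ: the sequence n ↦ K n / L n converges to ρ as n → ∞. -/

import Mathlib

/-- Lambda terms with de Bruijn indices. -/
inductive Term : Type
  | var : ℕ → Term
  | app : Term → Term → Term
  | abs : Term → Term

namespace Term

/-- Natural size: every operator (zero, successor, application, abstraction) has size 1. -/
def size : Term → ℕ
  | var k => k + 1
  | app M N => M.size + N.size + 1
  | abs M => M.size + 1

end Term

/-- `L n` is the number of lambda terms of size `n`. -/
noncomputable def L (n : ℕ) : ℕ := Nat.card {t : Term // t.size = n}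


/-- Neutral head normal forms: terms of the form `app (app … (app (var k) N₁) …) N_p`
with `p ≥ 0` and arbitrary terms `N₁, …, N_p`. -/
inductive IsNeutralHnf : Term → Prop
  | var (k : ℕ) : IsNeutralHnf (Term.var k)
  | app {m : Term} (n : Term) : IsNeutralHnf m → IsNeutralHnf (Term.app m n)

/-- `K n` is the number of neutral head normal forms of size `n`. -/
noncomputable def K (n : ℕ) : ℕ := Nat.card {t : Term // IsNeutralHnf t ∧ t.size = n}

section Counting
open Finset

/-- Assemble a term of size `n + 1`. -/
def mkTerm (n : ℕ) :
    Unit ⊕ {t : Term // t.size = n} ⊕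
      (Σ p : antidiagonal n, {t : Term // t.size = p.1.1} × {t : Term // t.size = p.1.2}) →
    {t : Term // t.size = n + 1}
  | Sum.inl _ => ⟨Term.var n, rfl⟩
  | Sum.inr (Sum.inl t) => ⟨Term.abs t.1, by simp [Term.size, t.2]⟩
  | Sum.inr (Sum.inr ⟨p, a, b⟩) => ⟨Term.app a.1 b.1, by
      have := mem_antidiagonal.1 p.2
      simp [Term.size, a.2, b.2, this]⟩

lemma mkTerm_bij (n : ℕ) : Function.Bijective (mkTerm n) := by
  constructor
  · rintro (_ | t | ⟨⟨⟨i, j⟩, p⟩, ⟨a, ha⟩, ⟨b, hb⟩⟩) (_ | t' | ⟨⟨⟨i', j'⟩, p'⟩, ⟨a', ha'⟩, ⟨b', hb'⟩⟩) h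
    all_goals replace h := congrArg Subtype.val h
    all_goals simp [mkTerm] at h
    · rfl
    · have := Subtype.ext h
      subst this; rfl
    · obtain ⟨rfl, rfl⟩ := h
      simp only at ha hb ha' hb'
      subst ha; subst hb; subst ha'; subst hb'; rfl
  · rintro ⟨t, ht⟩
    cases t with
    | var k =>
      refine ⟨Sum.inl (), ?_⟩
      simp only [Term.size] at ht
      have : k = n := by omega
      subst this; rfl
    | app a b =>
      simp only [Term.size] at ht
      exact ⟨Sum.inr (Sum.inr ⟨⟨(a.size, b.size), mem_antidiagonal.2 (by simp; omega)⟩,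
        ⟨a, rfl⟩, ⟨b, rfl⟩⟩), rfl⟩
    | abs a =>
      simp only [Term.size] at ht
      exact ⟨Sum.inr (Sum.inl ⟨a, by omega⟩), rfl⟩

lemma size_pos' (t : Term) : 0 < t.size := by cases t <;> simp [Term.size]

instance instFiniteTerm (n : ℕ) : Finite {t : Term // t.size = n} := by
  induction n using Nat.strong_induction_on with
  | _ n ih =>
    cases n with
    | zero =>
      have : IsEmpty {t : Term // t.size = 0} := ⟨fun t => by have := size_pos' t.1; have := t.2; omega⟩
      infer_instance
    | succ n =>
      have h1 := ih n (by omega)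
      have h2 : ∀ p : antidiagonal n,
          Finite ({t : Term // t.size = p.1.1} × {t : Term // t.size = p.1.2}) := by
        rintro ⟨⟨i, j⟩, p⟩
        have := mem_antidiagonal.1 p
        simp only at this
        have := ih i (by omega)
        have := ih j (by omega)
        simp only
        infer_instance
      exact Finite.of_surjective _ (mkTerm_bij n).2

lemma L_zero : L 0 = 0 := by
  have : IsEmpty {t : Term // t.size = 0} := ⟨fun t => by have := size_pos' t.1; have := t.2; omega⟩
  simp [L]

lemma L_succ (n : ℕ) : L (n + 1) = 1 + L n + ∑ p ∈ antidiagonal n, L p.1 * L p.2 := by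
  unfold L
  rw [← Nat.card_eq_of_bijective _ (mkTerm_bij n), Nat.card_sum, Nat.card_sum, Nat.card_sigma]
  simp only [Nat.card_prod]
  rw [Finset.sum_coe_sort (antidiagonal n) (fun p => Nat.card {t : Term // t.size = p.1} * Nat.card {t : Term // t.size = p.2})]
  simp [add_assoc]

/-- Assemble a neutral head normal form of size `n + 1`. -/
def mkNeut (n : ℕ) :
    Unit ⊕
      (Σ p : antidiagonal n, {t : Term // IsNeutralHnf t ∧ t.size = p.1.1} × {t : Term // t.size = p.1.2}) →
    {t : Term // IsNeutralHnf t ∧ t.size = n + 1}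
  | Sum.inl _ => ⟨Term.var n, IsNeutralHnf.var n, rfl⟩
  | Sum.inr ⟨p, a, b⟩ => ⟨Term.app a.1 b.1, IsNeutralHnf.app _ a.2.1, by
      have := mem_antidiagonal.1 p.2
      simp [Term.size, a.2, b.2, this]⟩

lemma mkNeut_bij (n : ℕ) : Function.Bijective (mkNeut n) := by
  constructor
  · rintro (_ | ⟨⟨⟨i, j⟩, p⟩, ⟨a, na, ha⟩, ⟨b, hb⟩⟩) (_ | ⟨⟨⟨i', j'⟩, p'⟩, ⟨a', na', ha'⟩, ⟨b', hb'⟩⟩) h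
    all_goals replace h := congrArg Subtype.val h
    all_goals simp [mkNeut] at h
    · rfl
    · obtain ⟨rfl, rfl⟩ := h
      simp only at ha hb ha' hb'
      subst ha; subst hb; subst ha'; subst hb'; rfl
  · rintro ⟨t, nt, ht⟩
    cases nt with
    | var k =>
      refine ⟨Sum.inl (), ?_⟩
      simp only [Term.size] at ht
      have : k = n := by omega
      subst this; rfl
    | @app a b na =>
      simp only [Term.size] at ht
      exact ⟨Sum.inr ⟨⟨(a.size, b.size), mem_antidiagonal.2 (by simp; omega)⟩,
        ⟨a, na, rfl⟩, ⟨b, rfl⟩⟩, rfl⟩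

instance instFiniteNeut (n : ℕ) : Finite {t : Term // IsNeutralHnf t ∧ t.size = n} :=
  Finite.of_injective (fun t => (⟨t.1, t.2.2⟩ : {t : Term // t.size = n}))
    (fun a b h => by simpa [Subtype.ext_iff] using h)

lemma K_zero : K 0 = 0 := by
  have : IsEmpty {t : Term // IsNeutralHnf t ∧ t.size = 0} :=
    ⟨fun t => by have := size_pos' t.1; have := t.2.2; omega⟩
  simp [K]

lemma K_succ (n : ℕ) : K (n + 1) = 1 + ∑ p ∈ antidiagonal n, K p.1 * L p.2 := by
  unfold K L
  rw [← Nat.card_eq_of_bijective _ (mkNeut_bij n), Nat.card_sum, Nat.card_sigma]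
  simp only [Nat.card_prod]
  rw [Finset.sum_coe_sort (antidiagonal n) (fun p => Nat.card {t : Term // IsNeutralHnf t ∧ t.size = p.1} * Nat.card {t : Term // t.size = p.2})]
  simp

end Counting

section Series
open PowerSeries

/-- Geometric series. -/
noncomputable def serE : PowerSeries ℝ := PowerSeries.mk 1
/-- Generating function of `L`. -/
noncomputable def serL : PowerSeries ℝ := PowerSeries.mk (fun n => (L n : ℝ))
/-- Generating function of `K`. -/
noncomputable def serK : PowerSeries ℝ := PowerSeries.mk (fun n => (K n : ℝ))

lemma serE_eq : serE * (1 - X) = 1 := PowerSeries.mk_one_mul_one_sub_eq_one ℝ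

lemma serL_eq : serL = X * (serE + serL + serL * serL) := by
  ext n
  cases n with
  | zero => simp [serL, L_zero]
  | succ n =>
    rw [coeff_succ_X_mul]
    simp [serL, serE, coeff_mul, L_succ]

lemma serK_eq : serK = X * (serE + serK * serL) := by
  ext n
  cases n with
  | zero => simp [serK, K_zero]
  | succ n =>
    rw [coeff_succ_X_mul]
    simp [serL, serK, serE, coeff_mul, K_succ]

lemma serK_eq' : serK = X * (serL + 1) := by
  have h : (1 - X * serL) * (serK - X * (serL + 1)) = 0 := by
    linear_combination serK_eq - X * serL_eq + X * serE_eq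
  rcases mul_eq_zero.1 h with h | h
  · have := congrArg (constantCoeff) h
    simp at this
  · exact sub_eq_zero.1 h

lemma K_eq (n : ℕ) : K (n + 2) = L (n + 1) := by
  have := congrArg (coeff (n + 2)) serK_eq'
  rw [coeff_succ_X_mul] at this
  simp [serK, serL, coeff_one] at this
  exact this

lemma L_pos (n : ℕ) : 0 < L (n + 1) := by rw [L_succ]; omega

/-- The square root of the discriminant. -/
noncomputable def serS : PowerSeries ℝ := 1 - X - 2 * X * serL

lemma serS_sq : serS ^ 2 * (1 - X) = (1 - X) ^ 3 - 4 * X ^ 2 := by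
  unfold serS
  linear_combination (-4 * X * (1 - X)) * serL_eq - 4 * X ^ 2 * serE_eq

lemma serS_coeff (n : ℕ) : coeff (n + 2) serS = -2 * (L (n + 1) : ℝ) := by
  have h : serS = 1 - X - X * (C (2 : ℝ) * serL) := by
    unfold serS
    rw [show (C (2:ℝ) : PowerSeries ℝ) = 2 from map_ofNat C 2]; ring
  rw [h, map_sub, coeff_succ_X_mul, coeff_C_mul]
  simp [coeff_one, coeff_X, serL]

/-- Scaled Catalan series. -/
noncomputable def serC (y : ℝ) : PowerSeries ℝ := PowerSeries.mk (fun n => (catalan n : ℝ) * y ^ n)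

lemma serC_eq (y : ℝ) : serC y = 1 + X * (C y * (serC y * serC y)) := by
  ext n
  cases n with
  | zero => simp [serC]
  | succ n =>
    rw [map_add, coeff_succ_X_mul, coeff_C_mul, coeff_mul]
    simp only [serC, coeff_mk, catalan_succ', coeff_one]
    push_cast
    rw [Finset.sum_mul, Finset.mul_sum]
    rw [zero_add]
    refine Finset.sum_congr rfl fun p hp => ?_
    rw [← Finset.HasAntidiagonal.mem_antidiagonal.1 hp]
    ring

/-- The square root of `1 - 4 y X`. -/
noncomputable def serA (y : ℝ) : PowerSeries ℝ := 1 - X * (C (2 * y) * serC y)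

lemma serA_sq (y : ℝ) : serA y ^ 2 = 1 - C (4 * y) * X := by
  have h2 : (C (2 * y) : PowerSeries ℝ) = 2 * C y := by rw [map_mul, map_ofNat]
  have h4 : (C (4 * y) : PowerSeries ℝ) = 4 * C y := by rw [map_mul, map_ofNat]
  unfold serA
  rw [h2, h4]
  linear_combination (-4 * X * C y) * serC_eq y

lemma serA_coeff (y : ℝ) (n : ℕ) : coeff (n + 1) (serA y) = - (2 * y * (catalan n * y ^ n)) := by
  unfold serA
  rw [map_sub, coeff_succ_X_mul, coeff_C_mul]
  simp [coeff_one, serC]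

lemma serA_coeff_zero (y : ℝ) : constantCoeff (serA y) = 1 := by simp [serA]

end Series

section Analysis
open Filter Topology

lemma conv_le (x : ℕ → ℝ) (hx : ∀ n, 0 ≤ x n) (N : ℕ) :
    ∑ n ∈ Finset.range N, ∑ p ∈ Finset.HasAntidiagonal.antidiagonal n, x p.1 * x p.2
      ≤ (∑ n ∈ Finset.range N, x n) ^ 2 := by
  rw [← Finset.sum_biUnion, pow_two, Finset.sum_mul_sum, ← Finset.sum_product']
  · refine Finset.sum_le_sum_of_subset_of_nonneg ?_ (fun p _ _ => mul_nonneg (hx _) (hx _))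
    intro p hp
    simp only [Finset.mem_biUnion, Finset.mem_range, Finset.HasAntidiagonal.mem_antidiagonal,
      Finset.mem_product] at *
    omega
  · intro i _ j _ hij
    refine Finset.disjoint_left.2 fun p hp hq => hij ?_
    rw [Finset.HasAntidiagonal.mem_antidiagonal] at hp hq
    omega

lemma majorant (v w : ℕ → ℝ) (hw : ∀ n, |w n| ≤ 17 / 10) (h0 : 2 * v 0 = w 0)
    (hs : ∀ n, 2 * v (n + 1) = w (n + 1) -
      ∑ p ∈ Finset.HasAntidiagonal.antidiagonal n, v p.1 * v p.2) (N : ℕ) :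
    ∑ k ∈ Finset.range N, |v k| * (7 / 20 : ℝ) ^ (k + 1) ≤ 1 := by
  induction N with
  | zero => simp
  | succ N ih =>
    set x : ℕ → ℝ := fun k => |v k| * (7 / 20 : ℝ) ^ (k + 1) with hx
    have hx0 : ∀ n, 0 ≤ x n := fun n => by positivity
    have step : ∀ n, 2 * x (n + 1) ≤ 17 / 10 * (7 / 20 : ℝ) ^ (n + 1 + 1) +
        ∑ p ∈ Finset.HasAntidiagonal.antidiagonal n, x p.1 * x p.2 := by
      intro n
      have e : ∑ p ∈ Finset.HasAntidiagonal.antidiagonal n, x p.1 * x p.2 =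
          (∑ p ∈ Finset.HasAntidiagonal.antidiagonal n, |v p.1 * v p.2|) * (7 / 20 : ℝ) ^ (n + 1 + 1) := by
        rw [Finset.sum_mul]
        refine Finset.sum_congr rfl fun p hp => ?_
        rw [← Finset.HasAntidiagonal.mem_antidiagonal.1 hp, abs_mul]
        simp only [hx]; ring
      have b : 2 * |v (n + 1)| ≤ 17 / 10 + ∑ p ∈ Finset.HasAntidiagonal.antidiagonal n, |v p.1 * v p.2| := by
        have : 2 * |v (n + 1)| = |2 * v (n + 1)| := by rw [abs_mul]; norm_num
        rw [this, hs]
        exact (abs_sub _ _).trans (add_le_add (hw _) (Finset.abs_sum_le_sum_abs _ _))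
      rw [e, ← add_mul]
      simp only [hx]
      rw [← mul_assoc]
      exact mul_le_mul_of_nonneg_right b (by positivity)
    have b0 : 2 * x 0 ≤ 17 / 10 * (7 / 20 : ℝ) ^ (0 + 1) := by
      have : 2 * |v 0| = |2 * v 0| := by rw [abs_mul]; norm_num
      have h := hw 0
      rw [← h0, ← this] at h
      simp only [hx]
      linarith
    have hsum := Finset.sum_le_sum (fun n (_ : n ∈ Finset.range N) => step n)
    rw [← Finset.mul_sum, Finset.sum_add_distrib] at hsum
    have hc := conv_le x hx0 N
    have hsq : (∑ n ∈ Finset.range N, x n) ^ 2 ≤ 1 :=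
      pow_le_one₀ (Finset.sum_nonneg fun _ _ => hx0 _) ih
    have hgeo : ∑ n ∈ Finset.range (N + 1), 17 / 10 * (7 / 20 : ℝ) ^ (n + 1) ≤ 1 := by
      have : ∀ M : ℕ, ∑ n ∈ Finset.range M, 17 / 10 * (7 / 20 : ℝ) ^ (n + 1)
          = 17 / 10 * (7 / 13) * (1 - (7 / 20 : ℝ) ^ M) := by
        intro M
        induction M with
        | zero => simp
        | succ M ihM => rw [Finset.sum_range_succ, ihM]; ring
      rw [this]
      have : (0:ℝ) ≤ (7 / 20 : ℝ) ^ (N + 1) := by positivity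
      linarith
    rw [Finset.sum_range_succ'] at hgeo ⊢
    change (∑ k ∈ Finset.range N, x (k + 1)) + x 0 ≤ 1
    linarith

lemma cat_rec (n : ℕ) : ((n : ℝ) + 2) * catalan (n + 1) = 2 * (2 * n + 1) * catalan n := by
  have h1 := succ_mul_catalan_eq_centralBinom n
  have h2 := succ_mul_catalan_eq_centralBinom (n + 1)
  have h3 := Nat.succ_mul_centralBinom_succ n
  rw [← h1, ← h2] at h3
  have h3' : ((n : ℝ) + 1) * ((n + 1 + 1) * catalan (n + 1)) = 2 * (2 * n + 1) * ((n + 1) * catalan n) := by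
    exact_mod_cast h3
  have : (n : ℝ) + 1 ≠ 0 := by positivity
  apply mul_left_cancel₀ this
  linear_combination h3'

/-- normalized Catalan numbers -/
noncomputable def cc (n : ℕ) : ℝ := catalan n / 4 ^ n

lemma cc_rec (n : ℕ) : cc (n + 1) = cc n * ((n + 1 / 2) / (n + 2)) := by
  have h := cat_rec n
  have : (n : ℝ) + 2 ≠ 0 := by positivity
  unfold cc
  field_simp
  rw [pow_succ]
  linear_combination 2 * 4 ^ n * h

lemma cc_zero : cc 0 = 1 := by simp [cc]

lemma cc_pos (n : ℕ) : 0 < cc n := by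
  induction n with
  | zero => simp [cc_zero]
  | succ n ih => rw [cc_rec]; positivity

lemma cc_mono : Monotone (fun n : ℕ => cc n * ((n : ℝ) + 1) ^ 2) := by
  refine monotone_nat_of_le_succ fun n => ?_
  have h := cc_pos n
  rw [cc_rec]
  have : (cc n * ((n + 1 / 2) / (n + 2)) * (((n + 1 : ℕ) : ℝ) + 1) ^ 2)
      = cc n * ((n + 1 / 2) * (n + 2)) := by
    push_cast
    have : (n : ℝ) + 2 ≠ 0 := by positivity
    field_simp
    ring
  rw [this]
  apply mul_le_mul_of_nonneg_left _ h.le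
  have : (0:ℝ) ≤ n := by positivity
  nlinarith

lemma cc_bound (m k : ℕ) : cc m ≤ cc (m + k) * ((k : ℝ) + 1) ^ 2 := by
  have h := cc_mono (Nat.le_add_right m k)
  simp only at h
  have hm : (0:ℝ) ≤ m := by positivity
  have hk : (0:ℝ) ≤ k := by positivity
  have h2 : (((m + k : ℕ) : ℝ) + 1) ^ 2 ≤ (((k : ℝ) + 1) * (m + 1)) ^ 2 := by
    apply pow_le_pow_left₀ (by positivity)
    push_cast
    nlinarith
  have h3 := mul_le_mul_of_nonneg_left h2 (cc_pos (m + k)).le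
  have : 0 < ((m:ℝ) + 1) ^ 2 := by positivity
  rw [mul_pow] at h3
  refine le_of_mul_le_mul_right ?_ this
  linarith

/-- absolute values of the coefficients of `sqrt (1 - z)` -/
noncomputable def bb : ℕ → ℝ
  | 0 => -1
  | n + 1 => cc n / 2

lemma bb_pos (n : ℕ) : 0 < bb (n + 1) := by have := cc_pos n; simp only [bb]; positivity

lemma bb_bound (m k : ℕ) : |bb m| ≤ 2 * ((k : ℝ) + 1) ^ 2 * |bb (m + k)| := by
  cases m with
  | zero =>
    cases k with
    | zero => simp [bb]
    | succ k =>
      have h := cc_bound 0 k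
      have hp := cc_pos k
      rw [cc_zero, zero_add] at h
      rw [zero_add, abs_of_pos (bb_pos k)]
      simp only [bb, abs_neg, abs_one]
      push_cast
      have hk : (0:ℝ) ≤ k := by positivity
      nlinarith [mul_nonneg hp.le hk]
  | succ m =>
    have h := cc_bound m k
    have hp := cc_pos m
    rw [show m + 1 + k = m + k + 1 by ring, abs_of_pos (bb_pos m), abs_of_pos (bb_pos _)]
    simp only [bb]
    nlinarith [hp]

lemma bb_ratio : Tendsto (fun n => bb n / bb (n + 1)) atTop (𝓝 1) := by
  rw [← tendsto_add_atTop_iff_nat 1]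
  have h : ∀ n : ℕ, bb (n + 1) / bb (n + 1 + 1) = 1 + (3 / 2) * ((n : ℝ) + 1 / 2)⁻¹ := by
    intro n
    have h0 := cc_pos n
    have : (n : ℝ) + 2 ≠ 0 := by positivity
    have : (n : ℝ) + 1 / 2 ≠ 0 := by positivity
    simp only [bb]
    rw [cc_rec]
    have : (n : ℝ) * 2 + 1 ≠ 0 := by positivity
    field_simp
    ring
  simp only [h]
  have : Tendsto (fun n : ℕ => ((n : ℝ) + 1 / 2)⁻¹) atTop (𝓝 0) :=
    tendsto_inv_atTop_zero.comp (tendsto_atTop_add_const_right _ _ tendsto_natCast_atTop_atTop)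
  simpa using (this.const_mul (3 / 2)).const_add 1

lemma bb_ratio_k (k : ℕ) : Tendsto (fun n => bb n / bb (n + k)) atTop (𝓝 1) := by
  induction k with
  | zero =>
    refine tendsto_const_nhds.congr' ?_
    filter_upwards [eventually_ge_atTop 1] with n hn
    obtain ⟨m, rfl⟩ := Nat.exists_eq_add_of_le' hn
    rw [add_zero, div_self (bb_pos m).ne']
  | succ k ih =>
    have := ih.mul (bb_ratio.comp (tendsto_add_atTop_nat k))
    rw [one_mul] at this
    refine this.congr' ?_
    filter_upwards [eventually_ge_atTop 1] with n hn
    obtain ⟨m, rfl⟩ := Nat.exists_eq_add_of_le' hn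
    simp only [Function.comp]
    rw [show m + 1 + (k + 1) = m + 1 + k + 1 by ring]
    have h1 : bb (m + 1 + k) ≠ 0 := by rw [show m + 1 + k = m + k + 1 by ring]; exact (bb_pos _).ne'
    have h2 := (bb_pos (m + 1 + k)).ne'
    field_simp

/-- transfer: convolution of a fast decaying sequence with `bb` -/
lemma transfer (d : ℕ → ℝ) (q : ℝ) (hq0 : 0 ≤ q) (hq1 : q < 1) (B : ℝ) (hd : ∀ k, |d k| ≤ B * q ^ k) :
    Tendsto (fun n => (∑ k ∈ Finset.range (n + 1), d k * bb (n - k)) / bb n) atTop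
      (𝓝 (∑' k, d k)) := by
  set f : ℕ → ℕ → ℝ := fun n k => if k ≤ n then d k * (bb (n - k) / bb n) else 0 with hf
  have key := tendsto_tsum_of_dominated_convergence (𝓕 := atTop) (f := f) (g := d)
    (bound := fun k => B * q ^ k * (2 * ((k : ℝ) + 1) ^ 2)) ?_ ?_ ?_
  · refine key.congr fun n => ?_
    rw [tsum_eq_sum (s := Finset.range (n + 1)), Finset.sum_div]
    · refine Finset.sum_congr rfl fun k hk => ?_
      have : k ≤ n := by simpa [Nat.lt_succ_iff] using hk
      simp only [hf, if_pos this, mul_div_assoc]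
    · intro k hk
      have : ¬ k ≤ n := by simpa [Nat.lt_succ_iff] using hk
      simp only [hf, if_neg this]
  · have hn : ‖q‖ < 1 := by rwa [Real.norm_of_nonneg hq0]
    have h2 := summable_pow_mul_geometric_of_norm_lt_one 2 hn
    have h1 := summable_pow_mul_geometric_of_norm_lt_one 1 hn
    have h0 := summable_pow_mul_geometric_of_norm_lt_one 0 hn
    refine (((h2.add (h1.mul_left 2)).add h0).mul_left (2 * B)).congr fun k => ?_
    ring
  · intro k
    have h := (bb_ratio_k k).const_mul (d k)
    rw [mul_one] at h
    rw [← tendsto_add_atTop_iff_nat k]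
    refine h.congr fun n => ?_
    simp [hf]
  · refine Eventually.of_forall fun n k => ?_
    have hB : 0 ≤ B * q ^ k := (abs_nonneg _).trans (hd k)
    by_cases hk : k ≤ n
    · simp only [hf, if_pos hk, Real.norm_eq_abs, abs_mul, abs_div]
      refine mul_le_mul (hd k) ?_ (by positivity) hB
      have h := bb_bound (n - k) k
      rw [Nat.sub_add_cancel hk] at h
      exact div_le_of_le_mul₀ (abs_nonneg _) (by positivity) h
    · simp only [hf, if_neg hk, norm_zero]
      positivity

end Analysis

section Main
open PowerSeries Filter Topology

lemma serA_coeff' (ρ : ℝ) (n : ℕ) (hρ : ρ ≠ 0) :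
    coeff n (serA (1 / (4 * ρ))) * ρ ^ n = - bb n := by
  cases n with
  | zero => simp [serA_coeff_zero, bb]
  | succ n =>
    rw [serA_coeff]
    simp only [bb, cc, div_pow, mul_pow, one_pow]
    field_simp
    ring

lemma exists_v (ρ : ℝ) (h0 : 0 < ρ) (h1 : ρ < 3 / 10) (h2 : 295 / 1000 < ρ)
    (hr : ρ ^ 3 + ρ ^ 2 + 3 * ρ - 1 = 0) :
    ∃ v : PowerSeries ℝ, serS = (1 + X * v) * serA (1 / (4 * ρ)) ∧
      ∀ N, ∑ k ∈ Finset.range N, |coeff k v| * (7 / 20 : ℝ) ^ (k + 1) ≤ 1 := by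
  set A := serA (1 / (4 * ρ)) with hA
  have hA1 : A * A⁻¹ = 1 := PowerSeries.mul_inv_cancel _ (by rw [hA, serA_coeff_zero]; exact one_ne_zero)
  have hgc : constantCoeff (serS * A⁻¹ - 1) = 0 := by
    simp [serS, hA, serA_coeff_zero]
  obtain ⟨v, hv⟩ := X_dvd_iff.2 hgc
  have hS : serS = (1 + X * v) * A := by
    linear_combination A * hv - serS * hA1
  refine ⟨v, hS, ?_⟩
  have hA2 : A ^ 2 = 1 - C ρ⁻¹ * X := by
    rw [hA, serA_sq]
    congr 3
    field_simp
  have hca : (C ρ : PowerSeries ℝ) * C ρ⁻¹ = 1 := by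
    rw [← map_mul, mul_inv_cancel₀ h0.ne', map_one]
  have hroot : (C ρ : PowerSeries ℝ) ^ 3 + C ρ ^ 2 + 3 * C ρ - 1 = 0 := by
    have := congrArg (C : ℝ →+* PowerSeries ℝ) hr
    simpa only [map_sub, map_add, map_mul, map_pow, map_one, map_zero, map_ofNat] using this
  have hroot' : (C ρ : PowerSeries ℝ) = C ρ⁻¹ ^ 2 - 3 * C ρ⁻¹ - 1 := by
    have : ρ = ρ⁻¹ ^ 2 - 3 * ρ⁻¹ - 1 := by
      field_simp
      linarith
    have := congrArg (C : ℝ →+* PowerSeries ℝ) this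
    simpa only [map_sub, map_add, map_mul, map_pow, map_one, map_zero, map_ofNat] using this
  have hA2ne : A ^ 2 ≠ 0 := by
    intro h
    have h' : A = 0 := by simpa using h
    rw [h'] at hA1
    simp at hA1
  have hg : (1 + X * v) ^ 2 * (1 - X) = 1 + (C ρ⁻¹ - 3) * X + C ρ * X ^ 2 := by
    apply mul_right_cancel₀ hA2ne
    have e := serS_sq
    rw [hS] at e
    have e2 : (1 + (C ρ⁻¹ - 3) * X + C ρ * X ^ 2) * (1 - C ρ⁻¹ * X)
        = (1 - X) ^ 3 - 4 * (X : PowerSeries ℝ) ^ 2 := by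
      linear_combination X ^ 2 * hroot' - X ^ 3 * hca
    rw [hA2, e2, ← e, ← hA2]
    ring
  have hE := serE_eq
  have hvw : 2 * v + X * (v * v) = (C ρ⁻¹ - 2) * serE + X * (C ρ * serE) := by
    apply mul_left_cancel₀ (X_ne_zero (R := ℝ))
    linear_combination serE * hg - (2 * X * v + X ^ 2 * v ^ 2) * hE
  have h2C : (2 : PowerSeries ℝ) = C 2 := (map_ofNat C 2).symm
  rw [h2C, ← map_sub] at hvw
  have hinv1 : ρ⁻¹ ≤ 34 / 10 := by
    rw [inv_le_comm₀ h0 (by norm_num)]; norm_num; linarith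
  have hinv2 : 3 ≤ ρ⁻¹ := by
    rw [le_inv_comm₀ (by norm_num) h0]; norm_num; linarith
  refine majorant (fun k => coeff k v)
    (fun n => coeff n (C (ρ⁻¹ - 2) * serE + X * (C ρ * serE))) ?_ ?_ ?_
  · intro n
    cases n with
    | zero =>
      simp [serE]
      rw [abs_le]; constructor <;> linarith
    | succ n =>
      simp only [map_add, coeff_succ_X_mul, coeff_C_mul]
      simp [serE]
      rw [abs_le]; constructor <;> linarith
  · simp only [← hvw]
    simp
  · intro n
    simp only [← hvw, map_add, coeff_succ_X_mul, coeff_C_mul]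
    rw [coeff_mul]; ring

lemma L_ratio (ρ : ℝ) (h0 : 0 < ρ) (h1 : ρ < 3 / 10) (h2 : 295 / 1000 < ρ)
    (hr : ρ ^ 3 + ρ ^ 2 + 3 * ρ - 1 = 0) :
    Tendsto (fun n : ℕ => (L (n + 1) : ℝ) / L (n + 2)) atTop (𝓝 ρ) := by
  obtain ⟨v, hS, hv⟩ := exists_v ρ h0 h1 h2 hr
  set d : ℕ → ℝ := fun k => coeff k (1 + X * v) * ρ ^ k with hd
  set q : ℝ := ρ * (20 / 7) with hq
  have hq0 : 0 < q := by positivity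
  have hq1 : q < 1 := by rw [hq]; linarith
  have hd0 : d 0 = 1 := by simp [hd]
  have hds : ∀ k, |d (k + 1)| = |coeff k v| * (7 / 20 : ℝ) ^ (k + 1) * q ^ (k + 1) := by
    intro k
    simp only [hd, map_add, coeff_succ_X_mul, coeff_one, abs_mul, hq, mul_pow]
    rw [if_neg (by omega), zero_add, abs_of_pos (pow_pos h0 _)]
    have : (7 / 20 : ℝ) ^ (k + 1) * (20 / 7 : ℝ) ^ (k + 1) = 1 := by
      rw [← mul_pow]; norm_num
    linear_combination - |coeff k v| * ρ ^ (k + 1) * this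
  have hvk : ∀ k, |coeff k v| * (7 / 20 : ℝ) ^ (k + 1) ≤ 1 := by
    intro k
    have := hv (k + 1)
    rw [Finset.sum_range_succ] at this
    have h : 0 ≤ ∑ k ∈ Finset.range k, |coeff k v| * (7 / 20 : ℝ) ^ (k + 1) :=
      Finset.sum_nonneg fun _ _ => by positivity
    linarith
  have hdb : ∀ k, |d k| ≤ 1 * q ^ k := by
    intro k
    cases k with
    | zero => simp [hd0]
    | succ k => rw [hds]; exact mul_le_mul_of_nonneg_right (hvk k) (by positivity)
  have ht := transfer d q hq0.le hq1 1 hdb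
  have hsumm : Summable fun k => |d k| :=
    Summable.of_nonneg_of_le (fun _ => abs_nonneg _) hdb
      ((summable_geometric_of_lt_one hq0.le hq1).mul_left 1)
  set γ := ∑' k, d k with hγ
  have hγ0 : γ ≠ 0 := by
    have e : γ = d 0 + ∑' k, d (k + 1) := hsumm.of_abs.tsum_eq_zero_add
    have hs1 : Summable fun k => |d (k + 1)| := (summable_nat_add_iff 1).2 hsumm
    have h3 : |∑' k, d (k + 1)| ≤ ∑' k, |d (k + 1)| := by
      have := norm_tsum_le_tsum_norm (f := fun k => d (k + 1)) (by simpa using hs1)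
      simpa using this
    have h4 : ∑' k, |d (k + 1)| ≤ q := by
      refine Real.tsum_le_of_sum_range_le (fun _ => abs_nonneg _) fun N => ?_
      calc ∑ k ∈ Finset.range N, |d (k + 1)|
          ≤ ∑ k ∈ Finset.range N, |coeff k v| * (7 / 20 : ℝ) ^ (k + 1) * q := by
            refine Finset.sum_le_sum fun k _ => ?_
            rw [hds]
            refine mul_le_mul_of_nonneg_left ?_ (by positivity)
            exact pow_le_of_le_one hq0.le hq1.le (by omega)
        _ ≤ q := by
            rw [← Finset.sum_mul]
            exact (mul_le_mul_of_nonneg_right (hv N) hq0.le).trans (one_mul q).le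
    intro h
    rw [h, hd0] at e
    have := (abs_le.1 (h3.trans h4)).1
    linarith
  have hs : ∀ n, coeff n serS * ρ ^ n = - ∑ k ∈ Finset.range (n + 1), d k * bb (n - k) := by
    intro n
    rw [hS, coeff_mul, Finset.Nat.sum_antidiagonal_eq_sum_range_succ_mk, Finset.sum_mul,
      ← Finset.sum_neg_distrib]
    refine Finset.sum_congr rfl fun k hk => ?_
    have hk : k ≤ n := by simpa [Nat.lt_succ_iff] using hk
    have e := serA_coeff' ρ (n - k) h0.ne'
    have hp : ρ ^ n = ρ ^ k * ρ ^ (n - k) := by rw [← pow_add, Nat.add_sub_cancel' hk]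
    simp only [hd]
    rw [hp]
    linear_combination coeff k (1 + X * v) * ρ ^ k * e
  set U : ℕ → ℝ := fun n => (∑ k ∈ Finset.range (n + 1), d k * bb (n - k)) / bb n with hU
  have hL : ∀ n, (L (n + 1) : ℝ) * (2 * ρ ^ (n + 2)) = U (n + 2) * bb (n + 2) := by
    intro n
    simp only [hU]
    rw [div_mul_cancel₀ _ (bb_pos _).ne']
    have := hs (n + 2)
    rw [serS_coeff] at this
    linarith
  have hlim : Tendsto (fun n => ρ * (U (n + 2) / U (n + 3) * (bb (n + 2) / bb (n + 2 + 1)))) atTop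
      (𝓝 (ρ * (γ / γ * 1))) :=
    (((ht.comp (tendsto_add_atTop_nat 2)).div (ht.comp (tendsto_add_atTop_nat 3)) hγ0).mul
      (bb_ratio.comp (tendsto_add_atTop_nat 2))).const_mul ρ
  rw [div_self hγ0, mul_one, mul_one] at hlim
  refine hlim.congr fun n => ?_
  have e1 := hL n
  have e2 := hL (n + 1)
  have p2 : (0:ℝ) < L (n + 2) := by exact_mod_cast L_pos (n + 1)
  rw [show n + 1 + 1 = n + 2 from rfl, show n + 1 + 2 = n + 3 from rfl] at e2
  rw [show n + 2 + 1 = n + 3 from rfl, div_mul_div_comm, ← e1, ← e2]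
  field_simp
  ring

end Main

theorem density_neutralHnf (ρ : ℝ)
    (hρ_mem : ρ ∈ Set.Ioo (0 : ℝ) 1)
    (hρ_root : ρ ^ 3 + ρ ^ 2 + 3 * ρ - 1 = 0) :
    Filter.Tendsto (fun n : ℕ => (K n : ℝ) / (L n : ℝ)) Filter.atTop (nhds ρ) := by

  obtain ⟨h0, h1⟩ := hρ_mem
  have hu : ρ < 3 / 10 := by
    by_contra! h
    nlinarith [pow_le_pow_left₀ (by norm_num) h 3, pow_le_pow_left₀ (by norm_num) h 2]
  have hl : 295 / 1000 < ρ := by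
    by_contra! h
    nlinarith [pow_le_pow_left₀ h0.le h 3, pow_le_pow_left₀ h0.le h 2]
  have h := L_ratio ρ h0 hu hl hρ_root
  rw [← Filter.tendsto_add_atTop_iff_nat 2]
  refine h.congr fun n => ?_
  rw [K_eq]
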